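/- In the frame setting below, assume x ≠ 0 and xc₁ − ry₁ ≠ 0. Write the shifted characters as e^L ch = (x, (y₁+xl₁)H + (y₂+xl₂)H^⊥ + (Δ+xΔ_L), z + L·ch₁ + (x/2)L·L) and e^L ch' = (r, (c₁+rl₁)H + (c₂+rl₂)H^⊥ + (Δ'+rΔ_L), χ + L·ch₁' + (r/2)L·L); note x(c₁+rl₁) − r(y₁+xl₁) = xc₁ − ry₁. Then: (i) C(e^L ch, e^L ch') = C(ch, ch') + l₁ − l₂·(δ/g)·(xc₂ − ry₂)/(xc₁ − ry₁) + (x·Δ'·Δ_L − r·Δ·Δ_L)/(g(xc₁ − ry₁)); and (ii) F(e^L ch) = F(ch) + (δ/g)l₂² − (2δ/g)(w − y₂/x)l₂ − (Δ_L·Δ_L)/g − 2(Δ·Δ_L)/(xg). -/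

import Mathlib

/-- Wall slope `C(ch, ch')` in a fixed frame `(H, H^⊥, w)` with `g = H·H`,
`δ = −H^⊥·H^⊥`, applied to decomposition coefficients. -/
noncomputable def Cslope (g δ w x y₁ y₂ z r c₁ c₂ χ : ℝ) : ℝ :=
  (x * χ - r * z + w * δ * (x * c₂ - r * y₂)) / (g * (x * c₁ - r * y₁))

/-- The quantity `F(ch)` from Bertram's nested wall lemma. -/
noncomputable def Fval (g δ w x y₁ y₂ z : ℝ) : ℝ :=
  δ / g * (w - y₂ / x) ^ 2
    + 1 / (x ^ 2 * g) * (y₁ ^ 2 * g - y₂ ^ 2 * δ - 2 * x * z)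

/-!
Twisting by `L` fixes the discriminant `ch₁·ch₁ - 2 ch₀ ch₂` and the class `ch₀ ch₁' - ch₀' ch₁`,
and it changes `ch₀ ch₂' - ch₀' ch₂` by the intersection number of `L` with that class. The slope
`C` is the last quantity, corrected by a multiple of the `H^⊥`-coefficient of the class, divided by
`g` times the `H`-coefficient; decomposing `L` and the class in the frame gives (i). Up to the
factor `1 / (x²g)`, the second summand of `F` is the discriminant minus `Δ·Δ`, so it changes only
through `Δ ↦ Δ + xΔ_L`, while the first summand changes through `y₂/x ↦ y₂/x + l₂`; this gives (ii).
-/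

section FrameDecomposition

variable {R M : Type*} [CommRing R] [AddCommGroup M] [Module R M]

/-- The decomposition `D = a H + b H^⊥ + Δ` of a class in the frame `(H, H^⊥)`, where the
residue `Δ` is orthogonal to the frame. -/
structure IsFrameDecomposition (B : M →ₗ[R] M →ₗ[R] R) (H Hp D : M) (a b : R) (Δ : M) : Prop where
  eq_add : D = a • H + b • Hp + Δ
  apply_H : B Δ H = 0
  apply_Hp : B Δ Hp = 0

namespace IsFrameDecomposition

variable {B : M →ₗ[R] M →ₗ[R] R} {H Hp D D' Δ Δ' : M} {a b a' b' : R}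

theorem add (hD : IsFrameDecomposition B H Hp D a b Δ)
    (hD' : IsFrameDecomposition B H Hp D' a' b' Δ') :
    IsFrameDecomposition B H Hp (D + D') (a + a') (b + b') (Δ + Δ') where
  eq_add := by rw [hD.eq_add, hD'.eq_add]; module
  apply_H := by simp [hD.apply_H, hD'.apply_H]
  apply_Hp := by simp [hD.apply_Hp, hD'.apply_Hp]

theorem smul (k : R) (hD : IsFrameDecomposition B H Hp D a b Δ) :
    IsFrameDecomposition B H Hp (k • D) (k * a) (k * b) (k • Δ) where
  eq_add := by rw [hD.eq_add]; module
  apply_H := by simp [hD.apply_H]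
  apply_Hp := by simp [hD.apply_Hp]

theorem sub (hD : IsFrameDecomposition B H Hp D a b Δ)
    (hD' : IsFrameDecomposition B H Hp D' a' b' Δ') :
    IsFrameDecomposition B H Hp (D - D') (a - a') (b - b') (Δ - Δ') where
  eq_add := by rw [hD.eq_add, hD'.eq_add]; module
  apply_H := by simp [hD.apply_H, hD'.apply_H]
  apply_Hp := by simp [hD.apply_Hp, hD'.apply_Hp]

theorem apply_eq (hB : B.IsRefl) (hH : B H Hp = 0) (hD : IsFrameDecomposition B H Hp D a b Δ)
    (hD' : IsFrameDecomposition B H Hp D' a' b' Δ') :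
    B D D' = a * a' * B H H + b * b' * B Hp Hp + B Δ Δ' := by
  rw [hD.eq_add, hD'.eq_add]
  simp only [map_add, map_smul, LinearMap.add_apply, LinearMap.smul_apply, smul_eq_mul, hH,
    hB _ _ hH, hD.apply_H, hD.apply_Hp, hB _ _ hD'.apply_H, hB _ _ hD'.apply_Hp]
  ring

end IsFrameDecomposition

end FrameDecomposition

section Twist

variable {K M : Type*} [Field K] [AddCommGroup M] [Module K M] {B : M →ₗ[K] M →ₗ[K] K}

/-- The degree-two component `ch₂ + L·ch₁ + (ch₀/2) L·L` of the twisted character `e^L ch`. -/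
def twistedCh₂ (B : M →ₗ[K] M →ₗ[K] K) (L : M) (ch₀ : K) (ch₁ : M) (ch₂ : K) : K :=
  ch₂ + B L ch₁ + ch₀ / 2 * B L L

/-- The Bogomolov discriminant `ch₁·ch₁ - 2 ch₀ ch₂` of a Chern character. -/
def bogomolovDiscriminant (B : M →ₗ[K] M →ₗ[K] K) (ch₀ : K) (ch₁ : M) (ch₂ : K) : K :=
  B ch₁ ch₁ - 2 * ch₀ * ch₂

theorem mul_twistedCh₂_sub_mul_twistedCh₂ (L : M) (x : K) (D : M) (z r : K) (D' : M) (χ : K) :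
    x * twistedCh₂ B L r D' χ - r * twistedCh₂ B L x D z
      = x * χ - r * z + B L (x • D' - r • D) := by
  simp only [twistedCh₂, map_sub, map_smul, smul_eq_mul]
  ring

theorem bogomolovDiscriminant_twist [NeZero (2 : K)] (hB : B.IsSymm) (L : M) (x : K) (D : M)
    (z : K) :
    bogomolovDiscriminant B x (D + x • L) (twistedCh₂ B L x D z)
      = bogomolovDiscriminant B x D z := by
  have hLD : B L D = B D L := hB.eq L D
  simp only [bogomolovDiscriminant, twistedCh₂, map_add, map_smul, LinearMap.add_apply,
    LinearMap.smul_apply, smul_eq_mul, hLD]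
  field_simp
  ring

end Twist

section Walls

variable {N : Type*} [AddCommGroup N] [Module ℝ N] {B : N →ₗ[ℝ] N →ₗ[ℝ] ℝ}
  {H Hp D D' L Δ Δ' ΔL : N} {g δ x y₁ y₂ r c₁ c₂ l₁ l₂ : ℝ}

theorem Cslope_twist (hB : B.IsRefl) (hH : B H Hp = 0) (hg : B H H = g) (hδ : B Hp Hp = -δ)
    (hD : IsFrameDecomposition B H Hp D y₁ y₂ Δ) (hD' : IsFrameDecomposition B H Hp D' c₁ c₂ Δ')
    (hL : IsFrameDecomposition B H Hp L l₁ l₂ ΔL) (hg₀ : g ≠ 0)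
    (hwall : x * c₁ - r * y₁ ≠ 0) (w z χ : ℝ) :
    Cslope g δ w x (y₁ + x * l₁) (y₂ + x * l₂) (twistedCh₂ B L x D z)
        r (c₁ + r * l₁) (c₂ + r * l₂) (twistedCh₂ B L r D' χ)
      = Cslope g δ w x y₁ y₂ z r c₁ c₂ χ + l₁
          - l₂ * (δ / g) * (x * c₂ - r * y₂) / (x * c₁ - r * y₁)
          + (x * B ΔL Δ' - r * B ΔL Δ) / (g * (x * c₁ - r * y₁)) := by
  have coeff_invariant (a b l : ℝ) : x * (a + r * l) - r * (b + x * l) = x * a - r * b := by ring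
  have apply_invariant_class : B L (x • D' - r • D) = l₁ * (x * c₁ - r * y₁) * g
      - l₂ * (x * c₂ - r * y₂) * δ + (x * B ΔL Δ' - r * B ΔL Δ) := by
    rw [hL.apply_eq hB hH ((hD'.smul x).sub (hD.smul r)), hg, hδ]
    simp only [map_sub, map_smul, smul_eq_mul]
    ring
  simp only [Cslope, coeff_invariant, mul_twistedCh₂_sub_mul_twistedCh₂, apply_invariant_class]
  field_simp
  ring

theorem Fval_eq_bogomolovDiscriminant (hB : B.IsRefl) (hH : B H Hp = 0) (hg : B H H = g)
    (hδ : B Hp Hp = -δ) (hD : IsFrameDecomposition B H Hp D y₁ y₂ Δ) (w x z : ℝ) :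
    Fval g δ w x y₁ y₂ z
      = δ / g * (w - y₂ / x) ^ 2 + (bogomolovDiscriminant B x D z - B Δ Δ) / (x ^ 2 * g) := by
  rw [Fval, bogomolovDiscriminant, hD.apply_eq hB hH hD, hg, hδ]
  ring

theorem Fval_twist (hB : B.IsSymm) (hH : B H Hp = 0) (hg : B H H = g) (hδ : B Hp Hp = -δ)
    (hD : IsFrameDecomposition B H Hp D y₁ y₂ Δ) (hL : IsFrameDecomposition B H Hp L l₁ l₂ ΔL)
    (hg₀ : g ≠ 0) (hx : x ≠ 0) (w z : ℝ) :
    Fval g δ w x (y₁ + x * l₁) (y₂ + x * l₂) (twistedCh₂ B L x D z)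
      = Fval g δ w x y₁ y₂ z + δ / g * l₂ ^ 2 - 2 * δ / g * (w - y₂ / x) * l₂
          - B ΔL ΔL / g - 2 * B Δ ΔL / (x * g) := by
  have apply_shifted_residue :
      B (Δ + x • ΔL) (Δ + x • ΔL) = B Δ Δ + 2 * x * B Δ ΔL + x ^ 2 * B ΔL ΔL := by
    have hΔ : B ΔL Δ = B Δ ΔL := hB.eq ΔL Δ
    simp only [map_add, map_smul, LinearMap.add_apply, LinearMap.smul_apply, smul_eq_mul, hΔ]
    ring
  rw [Fval_eq_bogomolovDiscriminant hB.isRefl hH hg hδ (hD.add (hL.smul x)),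
    Fval_eq_bogomolovDiscriminant hB.isRefl hH hg hδ hD, bogomolovDiscriminant_twist hB,
    apply_shifted_residue]
  field_simp
  ring

end Walls

/-- Shift-by-line-bundle formulas for `x ≠ 0`: writing
`e^L ch = (x, (y₁+xl₁)H + (y₂+xl₂)H^⊥ + (Δ+xΔ_L), z + L·ch₁ + (x/2)L·L)` and
similarly for `e^L ch'` (note `x(c₁+rl₁) − r(y₁+xl₁) = xc₁ − ry₁`), one has
the stated formulas for `C(e^Lch, e^Lch')` and `F(e^Lch)`. -/
theorem shift_by_line_bundle_rank_nonzero
    {N : Type*} [AddCommGroup N] [Module ℝ N]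
    (B : N →ₗ[ℝ] N →ₗ[ℝ] ℝ) (hsymm : ∀ D D' : N, B D D' = B D' D)
    (H Hp : N) (hHHp : B H Hp = 0)
    (g δ w : ℝ) (hg : g = B H H) (hgpos : 0 < g) (hδ : δ = -(B Hp Hp))
    (x y₁ y₂ z r c₁ c₂ χ l₁ l₂ : ℝ) (Δ Δ' ΔL : N)
    (hΔ1 : B Δ H = 0) (hΔ2 : B Δ Hp = 0)
    (hΔ'1 : B Δ' H = 0) (hΔ'2 : B Δ' Hp = 0)
    (hΔL1 : B ΔL H = 0) (hΔL2 : B ΔL Hp = 0)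
    (ch1 ch1' L : N)
    (hch1 : ch1 = y₁ • H + y₂ • Hp + Δ)
    (hch1' : ch1' = c₁ • H + c₂ • Hp + Δ')
    (hL : L = l₁ • H + l₂ • Hp + ΔL)
    (hx : x ≠ 0) (hwall : x * c₁ - r * y₁ ≠ 0) :
    x * (c₁ + r * l₁) - r * (y₁ + x * l₁) = x * c₁ - r * y₁ ∧
    Cslope g δ w x (y₁ + x * l₁) (y₂ + x * l₂) (z + B L ch1 + x / 2 * B L L)
        r (c₁ + r * l₁) (c₂ + r * l₂) (χ + B L ch1' + r / 2 * B L L)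
      = Cslope g δ w x y₁ y₂ z r c₁ c₂ χ + l₁
          - l₂ * (δ / g) * (x * c₂ - r * y₂) / (x * c₁ - r * y₁)
          + (x * B Δ' ΔL - r * B Δ ΔL) / (g * (x * c₁ - r * y₁)) ∧
    Fval g δ w x (y₁ + x * l₁) (y₂ + x * l₂) (z + B L ch1 + x / 2 * B L L)
      = Fval g δ w x y₁ y₂ z + δ / g * l₂ ^ 2 - 2 * δ / g * (w - y₂ / x) * l₂
          - B ΔL ΔL / g - 2 * B Δ ΔL / (x * g) := by
  have hB : B.IsSymm := ⟨hsymm⟩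
  have hD : IsFrameDecomposition B H Hp ch1 y₁ y₂ Δ := ⟨hch1, hΔ1, hΔ2⟩
  have hD' : IsFrameDecomposition B H Hp ch1' c₁ c₂ Δ' := ⟨hch1', hΔ'1, hΔ'2⟩
  have hLdec : IsFrameDecomposition B H Hp L l₁ l₂ ΔL := ⟨hL, hΔL1, hΔL2⟩
  have hHp : B Hp Hp = -δ := by rw [hδ, neg_neg]
  refine ⟨by ring, ?_, Fval_twist hB hHHp hg.symm hHp hD hLdec hgpos.ne' hx w z⟩
  rw [hsymm Δ' ΔL, hsymm Δ ΔL]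
  exact Cslope_twist hB.isRefl hHHp hg.symm hHp hD hD' hLdec hgpos.ne' hwall w z χ
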